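/- arXiv:1304.4921 — 4 statements merged into one kernel-verified Lean document; each statement's English description precedes it below -/
import Mathlib

section
/- There exist absolute constants C, c > 0 such that the following holds. For every ε ∈ (0,1], set δ = 1 / tower(⌈C·log(1/ε)⌉ + c). Then for every n ∈ ℕ, with N = 2ⁿ, every subset A ⊆ 𝔽₂ⁿ that is ε-far from being triangle-free contains at least δ·N² triangles, i.e. at least δ·N² triples (x,y,z) ∈ A³ with x+y+z = 0. -/
open scoped Classical BigOperators

noncomputable section

/-- The group `G = 𝔽₂ⁿ`. -/
abbrev G (n : ℕ) : Type := Fin n → ZMod 2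

/-- The coset `H + g` (note that `-g = g` in `𝔽₂ⁿ`). -/
def coset {n : ℕ} (H : AddSubgroup (G n)) (g : G n) : Set (G n) := {x | x + g ∈ H}

/-- The entropy function `f(x) = x log x` (with `f 0 = 0`). -/
def ent (x : ℝ) : ℝ := x * Real.log x

/-- The density of `A` on the coset `H + g`. -/
def dens {n : ℕ} (A : Set (G n)) (H : AddSubgroup (G n)) (g : G n) : ℝ :=
  (Nat.card ↥(A ∩ coset H g) : ℝ) / (Nat.card ↥H : ℝ)

/-- Mean entropy `F_A(G, H)` of partitioning `G` into cosets of `H`. -/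
def meanEntG {n : ℕ} (A : Set (G n)) (H : AddSubgroup (G n)) : ℝ :=
  (∑ g : G n, ent (dens A H g)) / (Fintype.card (G n) : ℝ)

/-- Mean entropy `F_A(H + g, H')` of partitioning the coset `H + g` into cosets of `H'`. -/
def meanEntCoset {n : ℕ} (A : Set (G n)) (H H' : AddSubgroup (G n)) (g : G n) : ℝ :=
  (∑ g₁ : ↥H, ent (dens A H' (g + ↑g₁))) / (Nat.card ↥H : ℝ)

/-- The standard bilinear form on `𝔽₂ⁿ`. -/
def dotp {n : ℕ} (x y : G n) : ZMod 2 := ∑ i, x i * y i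

/-- The character value `(-1)^{⟨x, y⟩}`. -/
def chi {n : ℕ} (x y : G n) : ℝ := if dotp x y = 0 then 1 else -1

/-- Fourier coefficient `f̂_H^g(η) = E_{x ∈ H} [f(x + g) · (-1)^{⟨x, η⟩}]`. -/
def fCoeff {n : ℕ} (H : AddSubgroup (G n)) (g : G n) (f : G n → ℝ) (η : G n) : ℝ :=
  (∑ x : ↥H, f (↑x + g) * chi ↑x η) / (Nat.card ↥H : ℝ)

/-- `f` is `ρ`-superregular on `H + g`: every Fourier coefficient at a character that is
nontrivial on `H` is at most `ρ` times the zeroth coefficient in absolute value. -/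
def SuperregularOn {n : ℕ} (H : AddSubgroup (G n)) (g : G n) (ρ : ℝ) (f : G n → ℝ) : Prop :=
  ∀ η : G n, (∃ x ∈ H, dotp x η ≠ 0) →
    |fCoeff H g f η| ≤ ρ * fCoeff H g f 0

/-- `H'` `(α, β, k)`-shatters `A` on `H + g`. -/
def Shatters {n : ℕ} (H' H : AddSubgroup (G n)) (A : Set (G n)) (g : G n)
    (α β k : ℝ) : Prop :=
  (Nat.card ↥H : ℝ) / (Nat.card ↥H' : ℝ) ≤ (2 : ℝ) ^ k ∧
  α ≤ (Nat.card {g' : ↥H //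
        (Nat.card ↥(A ∩ coset H' (g + ↑g')) : ℝ) ≤ β * dens A H g * (Nat.card ↥H' : ℝ)} : ℝ) /
      (Nat.card ↥H : ℝ)

/-- Number of triangles `(a, b, c)`, `a + b + c = 0`, with `a ∈ S₁`, `b ∈ S₂`, `c ∈ S₃`. -/
def triBetween {n : ℕ} (S₁ S₂ S₃ : Set (G n)) : ℕ :=
  Nat.card {p : G n × G n × G n // p.1 ∈ S₁ ∧ p.2.1 ∈ S₂ ∧ p.2.2 ∈ S₃ ∧ p.1 + p.2.1 + p.2.2 = 0}

/-- Number of triangles in `A`. -/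
def triCount {n : ℕ} (A : Set (G n)) : ℕ := triBetween A A A

/-- The annihilator of `K`: characters trivial on `K`. -/
def ann {n : ℕ} (K : AddSubgroup (G n)) : AddSubgroup (G n) where
  carrier := {η | ∀ x ∈ K, dotp x η = 0}
  zero_mem' := by intro x _; simp [dotp]
  add_mem' := by
    intro a b ha hb x hx
    have h : dotp x (a + b) = dotp x a + dotp x b := by
      simp [dotp, mul_add, Finset.sum_add_distrib]
    rw [h, ha x hx, hb x hx, add_zero]
  neg_mem' := by
    intro a ha x hx
    have h : dotp x (-a) = -dotp x a := by
      simp [dotp]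
    rw [h, ha x hx, neg_zero]

/-- Average of `f` over the coset `v + H'`. -/
def fbar {n : ℕ} (H' : AddSubgroup (G n)) (f : G n → ℝ) (v : G n) : ℝ :=
  (∑ y : ↥H', f (v + ↑y)) / (Nat.card ↥H' : ℝ)

/-- Tower function: `tower 0 = 1`, `tower (i+1) = 2 ^ tower i`. -/
def tower : ℕ → ℕ
  | 0 => 1
  | k + 1 => 2 ^ tower k

/-- `A` is `ε`-far from triangle-free: at least `ε N` elements must be removed from `A`
to destroy all triangles. -/
def FarFromTriangleFree {n : ℕ} (A : Set (G n)) (ε : ℝ) : Prop :=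
  ∀ B ⊆ A, (∀ x ∈ B, ∀ y ∈ B, ∀ z ∈ B, x + y + z ≠ 0) →
    ε * 2 ^ n ≤ (Nat.card ↥(A \ B) : ℝ)

/-- The set of elements of a triangle. -/
def elems {n : ℕ} (p : G n × G n × G n) : Set (G n) := {p.1, p.2.1, p.2.2}

/-!
The argument is that of Fox and Lovász. Write `N` for the order of the group, and suppose that no
element of `A` lies in more than `N / 8 ^ (e + 1)` triangles. Pull `A` back along a random affine
map from a cube of dimension `3 * e`: by a union bound, at least half of the triangles are expected
to share no vertex with another one in the pullback. Such isolated triangles form a tricolored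
sum-free set, of size at most `3 * (27 / 4) ^ e` by the slice rank method, and averaging over
translates shows that `A` has at most `6 * (27 / 256) ^ e * N ^ 2` triangles. Hence at most
`384 * (27 / 32) ^ e * N` elements of `A` lie in more than `N / 8 ^ (e + 2)` triangles. Deleting
them and repeating with `e + 1` in place of `e` destroys all triangles at a cost bounded by a
geometric series. Starting from `e` of order `log (1 / ε)` gives a removal lemma with polynomial
dependence on `ε`, which is far stronger than the tower bound.
-/

section SliceRank

open Finset

lemma exists_mem_finrank_le_card_support {K ι : Type*} [Field K] [Fintype ι]
    (W : Submodule K (ι → K)) : ∃ h ∈ W, Module.finrank K W ≤ #{i | h i ≠ 0} := by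
  let supp : (ι → K) → Finset ι := fun h => {i | h i ≠ 0}
  obtain ⟨-, ⟨h, hW, rfl⟩, hmax⟩ :=
    (supp '' W).toFinite.exists_maximal ⟨_, 0, W.zero_mem, rfl⟩
  refine ⟨h, hW, ?_⟩
  by_contra! hlt
  let restrict : W →ₗ[K] (supp h → K) := (LinearMap.funLeft K K Subtype.val).comp W.subtype
  have hker : LinearMap.ker restrict ≠ ⊥ := LinearMap.ker_ne_bot_of_finrank_lt (by
    rwa [Module.finrank_fintype_fun_eq_card, Fintype.card_coe])
  obtain ⟨g, hg, hg0⟩ := Submodule.exists_mem_ne_zero_of_ne_bot hker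
  have hgh : ∀ i, h i ≠ 0 → (g : ι → K) i = 0 := fun i hi =>
    congrFun (LinearMap.mem_ker.1 hg) ⟨i, by simpa [supp] using hi⟩
  obtain ⟨i, hi⟩ : ∃ i, (g : ι → K) i ≠ 0 := by
    by_contra! h0
    exact hg0 (Subtype.ext (funext h0))
  have hle : supp h ≤ supp (h + g) := fun j hj => by
    have hj : h j ≠ 0 := by simpa [supp] using hj
    simpa [supp, hgh j hj] using hj
  have hi0 : h i = 0 := not_imp_comm.1 (hgh i) hi
  have hmem : i ∈ supp h := hmax ⟨h + g, W.add_mem hW g.2, rfl⟩ hle (by simpa [supp, hi0] using hi)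
  simp [supp, hi0] at hmem

lemma rank_mul_add_mul_le {K m n α β : Type*} [Field K] [Fintype n] [Fintype α]
    [Fintype β] (A : Matrix m α K) (B : Matrix α n K) (C : Matrix m β K) (D : Matrix β n K) :
    (A * B + C * D).rank ≤ Fintype.card α + Fintype.card β := by
  rw [← Matrix.fromCols_mul_fromRows, ← Fintype.card_sum]
  exact (Matrix.rank_mul_le_left _ _).trans (Matrix.rank_le_card_width _)

lemma contraction_eq_diagonal {R ι : Type*} [CommSemiring R] [Fintype ι] {T : ι → ι → ι → R}
    (hT : ∀ i j k, T i j k ≠ 0 → i = j ∧ j = k) (h : ι → R) :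
    (Matrix.of fun i j => ∑ k, h k * T i j k) = Matrix.diagonal fun i => h i * T i i i := by
  ext i j
  rcases eq_or_ne i j with rfl | hij
  · rw [Matrix.of_apply, Matrix.diagonal_apply_eq]
    exact Fintype.sum_eq_single i fun k hk => by
      rw [not_not.1 (mt (hT i i k) fun hik => hk hik.2.symm), mul_zero]
  · rw [Matrix.of_apply, Matrix.diagonal_apply_ne _ hij]
    exact Fintype.sum_eq_zero _ fun k => by
      rw [not_not.1 (mt (hT i j k) fun hik => hij hik.1), mul_zero]

variable {R ι α β γ : Type*} [Fintype ι] [Fintype α] [Fintype β] [Fintype γ]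

lemma contraction_eq_mul_add_mul [CommSemiring R] {T : ι → ι → ι → R}
    {f₁ : α → ι → R} {g₁ : α → ι → ι → R} {f₂ : β → ι → R} {g₂ : β → ι → ι → R}
    {f₃ : γ → ι → R} {g₃ : γ → ι → ι → R}
    (hslice : ∀ i j k, T i j k =
      ∑ a, f₁ a i * g₁ a j k + ∑ b, f₂ b j * g₂ b i k + ∑ c, f₃ c k * g₃ c i j)
    {h : ι → R} (horth : ∀ c, ∑ k, f₃ c k * h k = 0) :
    (Matrix.of fun i j => ∑ k, h k * T i j k) =
      (Matrix.of fun i a => f₁ a i) * (Matrix.of fun a j => ∑ k, h k * g₁ a j k) +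
      (Matrix.of fun i b => ∑ k, h k * g₂ b i k) * Matrix.of f₂ := by
  ext i j
  have hfirst : ∑ k, h k * ∑ a, f₁ a i * g₁ a j k = ∑ a, f₁ a i * ∑ k, h k * g₁ a j k := by
    simp only [mul_sum]
    rw [sum_comm]
    exact sum_congr rfl fun _ _ => sum_congr rfl fun _ _ => mul_left_comm _ _ _
  have hsecond : ∑ k, h k * ∑ b, f₂ b j * g₂ b i k = ∑ b, (∑ k, h k * g₂ b i k) * f₂ b j := by
    simp only [mul_sum, sum_mul]
    rw [sum_comm]
    exact sum_congr rfl fun _ _ => sum_congr rfl fun _ _ => by ring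
  have hthird : ∑ k, h k * ∑ c, f₃ c k * g₃ c i j = 0 := by
    calc ∑ k, h k * ∑ c, f₃ c k * g₃ c i j = ∑ c, (∑ k, f₃ c k * h k) * g₃ c i j := by
          simp only [mul_sum, sum_mul]
          rw [sum_comm]
          exact sum_congr rfl fun _ _ => sum_congr rfl fun _ _ => by ring
      _ = 0 := by simp only [horth, zero_mul, sum_const_zero]
  simp only [Matrix.add_apply, Matrix.mul_apply, Matrix.of_apply, hslice, mul_add,
    sum_add_distrib, hfirst, hsecond, hthird, add_zero]

/-- Contract the third index against a vector orthogonal to all the `f₃ c`: the third family of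
slices disappears, and the other two make a diagonal matrix of rank at most `card α + card β`. -/
theorem card_le_of_eq_sum_slices [Field R] {T : ι → ι → ι → R}
    (hT : ∀ i j k, T i j k ≠ 0 ↔ i = j ∧ j = k)
    {f₁ : α → ι → R} {g₁ : α → ι → ι → R} {f₂ : β → ι → R} {g₂ : β → ι → ι → R}
    {f₃ : γ → ι → R} {g₃ : γ → ι → ι → R}
    (hslice : ∀ i j k, T i j k =
      ∑ a, f₁ a i * g₁ a j k + ∑ b, f₂ b j * g₂ b i k + ∑ c, f₃ c k * g₃ c i j) :
    Fintype.card ι ≤ Fintype.card α + Fintype.card β + Fintype.card γ := by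
  let L : (ι → R) →ₗ[R] (γ → R) := Matrix.mulVecLin (Matrix.of f₃)
  obtain ⟨h, hker, hsupp⟩ := exists_mem_finrank_le_card_support (LinearMap.ker L)
  have horth (c) : ∑ k, f₃ c k * h k = 0 := congrFun (LinearMap.mem_ker.1 hker) c
  have hrank : #{i | h i ≠ 0} ≤ Fintype.card α + Fintype.card β := by
    have hsame (i) : h i * T i i i ≠ 0 ↔ h i ≠ 0 := by
      simp only [ne_eq, mul_eq_zero, (hT i i i).2 ⟨rfl, rfl⟩, or_false]
    calc #{i | h i ≠ 0} = (Matrix.diagonal fun i => h i * T i i i).rank := by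
          simp only [Matrix.rank_diagonal, Fintype.card_subtype, hsame]
      _ ≤ Fintype.card α + Fintype.card β := by
          rw [← contraction_eq_diagonal (fun i j k => (hT i j k).1) h,
            contraction_eq_mul_add_mul hslice horth]
          exact rank_mul_add_mul_le _ _ _ _
  have hnullity := LinearMap.finrank_range_add_finrank_ker L
  have hrange : Module.finrank R (LinearMap.range L) ≤ Fintype.card γ := by
    simpa only [Module.finrank_fintype_fun_eq_card] using Submodule.finrank_le (LinearMap.range L)
  rw [Module.finrank_fintype_fun_eq_card] at hnullity
  omega

end SliceRank

section TricoloredSumFree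

open Finset

lemma prod_one_add_sum_eq_sum_option {R κ τ : Type*} [CommSemiring R] [Fintype κ] [Fintype τ]
    (X : κ → τ → R) :
    ∏ t, (1 + ∑ c, X c t) = ∑ χ : τ → Option κ, ∏ c, ∏ t with χ t = some c, X c t := by
  have hterm (t : τ) : 1 + ∑ c, X c t = ∑ o : Option κ, o.elim 1 (X · t) := by
    rw [Fintype.sum_option, Option.elim_none]
    rfl
  simp_rw [hterm, prod_univ_sum, Fintype.piFinset_univ]
  refine sum_congr rfl fun χ _ => ?_
  simp_rw [prod_filter]
  rw [prod_comm]
  refine prod_congr rfl fun t _ => ?_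
  cases χ t <;> simp

/-- The coefficient of the monomial `∏ t ∈ I, X c t` in the expansion of `∏ t, (1 + ∑ c, X c t)`,
when each term of the expansion, indexed by `χ : τ → Option κ`, is allotted to the colour `m χ`. -/
def sliceCofactor {R κ τ : Type*} [CommSemiring R] [Fintype κ] [Fintype τ]
    (m : (τ → Option κ) → κ) (X : κ → τ → R) (c : κ) (I : Finset τ) : R :=
  ∑ χ with m χ = c ∧ ({t | χ t = some c} : Finset τ) = I,
    ∏ b ∈ univ.erase c, ∏ t with χ t = some b, X b t

lemma sliceCofactor_congr {R κ τ : Type*} [CommSemiring R] [Fintype κ] [Fintype τ]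
    (m : (τ → Option κ) → κ) {X Y : κ → τ → R} {c : κ} (h : ∀ b ≠ c, X b = Y b)
    (I : Finset τ) : sliceCofactor m X c I = sliceCofactor m Y c I :=
  sum_congr rfl fun _ _ => prod_congr rfl fun b hb => by rw [h b (ne_of_mem_erase hb)]

lemma prod_one_add_sum_eq_sum_slices {R κ τ : Type*} [CommSemiring R] [Fintype κ] [Fintype τ]
    {e : ℕ} {m : (τ → Option κ) → κ} (hm : ∀ χ, #{t | χ t = some (m χ)} ≤ e) (X : κ → τ → R) :
    ∏ t, (1 + ∑ c, X c t) =
      ∑ c, ∑ I : {I : Finset τ // #I ≤ e}, (∏ t ∈ I.1, X c t) * sliceCofactor m X c I := by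
  have hslice (c : κ) (χ : τ → Option κ) :
      (∑ I : {I : Finset τ // #I ≤ e}, if m χ = c ∧ ({t | χ t = some c} : Finset τ) = I then
        (∏ t ∈ I.1, X c t) * ∏ b ∈ univ.erase c, ∏ t with χ t = some b, X b t else 0) =
      if m χ = c then ∏ b, ∏ t with χ t = some b, X b t else 0 := by
    split_ifs with hc
    · subst hc
      rw [Fintype.sum_eq_single ⟨({t | χ t = some (m χ)} : Finset τ), hm χ⟩
        fun I hI => if_neg fun hχ => hI (Subtype.ext hχ.2.symm), if_pos ⟨rfl, rfl⟩]
      exact mul_prod_erase univ (fun b => ∏ t with χ t = some b, X b t) (mem_univ _)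
    · simp only [hc, false_and, if_false, sum_const_zero]
  simp_rw [sliceCofactor, mul_sum, sum_filter]
  calc ∏ t, (1 + ∑ c, X c t)
      = ∑ χ : τ → Option κ, ∑ c,
          if m χ = c then ∏ b, ∏ t with χ t = some b, X b t else 0 := by
        simp [prod_one_add_sum_eq_sum_option]
    _ = _ := by
        rw [sum_comm]
        refine sum_congr rfl fun c _ => ?_
        rw [sum_comm]
        exact sum_congr rfl fun χ _ => (hslice c χ).symm

lemma exists_forall_card_color_le {κ τ : Type*} [Fintype κ] [Fintype τ] {e : ℕ}
    (h : Fintype.card τ < Fintype.card κ * (e + 1)) :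
    ∃ m : (τ → Option κ) → κ, ∀ χ, #{t | χ t = some (m χ)} ≤ e := by
  have hexists (χ : τ → Option κ) : ∃ c, #{t | χ t = some c} ≤ e := by
    obtain ⟨o, ho, hcard⟩ := exists_card_fiber_lt_of_card_lt_mul (s := univ)
      (t := univ.map (Function.Embedding.some (α := κ))) (f := χ) (by simpa using h)
    obtain ⟨c, -, rfl⟩ := mem_map.1 ho
    exact ⟨c, Nat.lt_succ_iff.1 hcard⟩
  exact ⟨fun χ => (hexists χ).choose, fun χ => (hexists χ).choose_spec⟩

/-- A tricolored sum-free set, given as an indexed family of triples: the only zero sums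
`x i + y j + z k` are the diagonal ones, and these all vanish. -/
def TricoloredSumFree {V ι : Type*} [AddCommMonoid V] (x y z : ι → V) : Prop :=
  ∀ i j k, x i + y j + z k = 0 ↔ i = j ∧ j = k

lemma prod_one_add_ne_zero_iff {τ : Type*} [Fintype τ] (s : τ → ZMod 2) :
    ∏ t, (1 + s t) ≠ 0 ↔ s = 0 := by
  have hbit : ∀ a : ZMod 2, 1 + a ≠ 0 ↔ a = 0 := by decide
  simp [prod_ne_zero_iff, hbit, funext_iff]

theorem TricoloredSumFree.card_le {τ ι : Type*} [Fintype τ] [Fintype ι] {x y z : ι → τ → ZMod 2}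
    (h : TricoloredSumFree x y z) {e : ℕ} (he : Fintype.card τ < 3 * (e + 1)) :
    Fintype.card ι ≤ 3 * #{I : Finset τ | #I ≤ e} := by
  obtain ⟨m, hm⟩ := exists_forall_card_color_le (κ := Fin 3) (by simpa using he)
  have hT (i j k) : ∏ t, (1 + ∑ c, ![x i, y j, z k] c t) ≠ 0 ↔ i = j ∧ j = k := by
    rw [← h i j k, ← prod_one_add_ne_zero_iff]
    simp only [Fin.sum_univ_three, Matrix.cons_val, Pi.add_apply]
  let Small := {I : Finset τ // #I ≤ e}
  have hcard := card_le_of_eq_sum_slices hT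
    (f₁ := fun (I : Small) i => ∏ t ∈ I.1, x i t)
    (g₁ := fun I j k => sliceCofactor m ![0, y j, z k] 0 I)
    (f₂ := fun (I : Small) j => ∏ t ∈ I.1, y j t)
    (g₂ := fun I i k => sliceCofactor m ![x i, 0, z k] 1 I)
    (f₃ := fun (I : Small) k => ∏ t ∈ I.1, z k t)
    (g₃ := fun I i j => sliceCofactor m ![x i, y j, 0] 2 I)
    fun i j k => by
      have h₀ := sliceCofactor_congr m (X := ![x i, y j, z k]) (Y := ![0, y j, z k]) (c := 0)
        (by simp [Fin.forall_fin_succ])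
      have h₁ := sliceCofactor_congr m (X := ![x i, y j, z k]) (Y := ![x i, 0, z k]) (c := 1)
        (by simp [Fin.forall_fin_succ])
      have h₂ := sliceCofactor_congr m (X := ![x i, y j, z k]) (Y := ![x i, y j, 0]) (c := 2)
        (by simp [Fin.forall_fin_succ])
      rw [prod_one_add_sum_eq_sum_slices hm, Fin.sum_univ_three]
      simp only [h₀, h₁, h₂, Matrix.cons_val, Small]
  rw [Fintype.card_subtype] at hcard
  omega

lemma card_card_le_mul_pow_le {τ : Type*} [Fintype τ] {a : ℝ} (h₀ : 0 ≤ a) (h₁ : a ≤ 1) (e : ℕ) :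
    #{I : Finset τ | #I ≤ e} * a ^ e ≤ (a + 1) ^ Fintype.card τ := by
  calc #{I : Finset τ | #I ≤ e} * a ^ e = ∑ I : Finset τ with #I ≤ e, a ^ e := by simp
    _ ≤ ∑ I : Finset τ with #I ≤ e, a ^ #I :=
        sum_le_sum fun I hI => pow_le_pow_of_le_one h₀ h₁ (mem_filter.1 hI).2
    _ ≤ ∑ I : Finset τ, a ^ #I := sum_le_univ_sum_of_nonneg fun I => pow_nonneg h₀ _
    _ = (a + 1) ^ Fintype.card τ := by simp [← Fintype.sum_pow_mul_eq_add_pow τ a 1]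

lemma TricoloredSumFree.card_mul_four_pow_le {e : ℕ} {ι : Type*} [Fintype ι]
    {x y z : ι → Fin (3 * e) → ZMod 2} (h : TricoloredSumFree x y z) :
    Fintype.card ι * 4 ^ e ≤ 3 * 27 ^ e := by
  have hι : (Fintype.card ι : ℝ) ≤ 3 * #{I : Finset (Fin (3 * e)) | #I ≤ e} := by
    exact_mod_cast h.card_le (e := e) (by rw [Fintype.card_fin]; omega)
  have hsmall := card_card_le_mul_pow_le (τ := Fin (3 * e)) (a := 1 / 2) (by norm_num)
    (by norm_num) e
  rw [Fintype.card_fin] at hsmall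
  rw [← Nat.cast_le (α := ℝ)]
  push_cast
  calc (Fintype.card ι : ℝ) * 4 ^ e ≤ 3 * #{I : Finset (Fin (3 * e)) | #I ≤ e} * 4 ^ e := by gcongr
    _ = 3 * 8 ^ e * (#{I : Finset (Fin (3 * e)) | #I ≤ e} * (1 / 2) ^ e) := by
        rw [show (4 : ℝ) = 8 * (1 / 2) by norm_num, mul_pow]
        ring
    _ ≤ 3 * 8 ^ e * (1 / 2 + 1) ^ (3 * e) := by gcongr
    _ = 3 * 27 ^ e := by
        rw [pow_mul, mul_assoc, ← mul_pow]
        norm_num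

end TricoloredSumFree

section Sampling

open Finset

lemma card_filter_add_left {H : Type*} [AddGroup H] [Fintype H] (a : H) (P : H → Prop)
    [DecidablePred P] : #{z | P (a + z)} = #{z | P z} :=
  card_equiv (Equiv.addLeft a) (by simp)

section Triangles

variable {V : Type*} [AddCommGroup V] [Fintype V]

/-- The triangles of `A`, each recorded by its first two vertices `x` and `y`. The third vertex is
written `x + y`, which is meant for groups of exponent 2, where it equals `-(x + y)`. -/
def trianglePairs (A : Finset V) : Finset (V × V) :=
  {p | p.1 ∈ A ∧ p.2 ∈ A ∧ p.1 + p.2 ∈ A}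

/-- The number of triangles of `A` with first vertex `x`. -/
def triangleDegree (A : Finset V) (x : V) : ℕ :=
  #{y | (x, y) ∈ trianglePairs A}

/-- The shifts `z` for which translating two of the three vertices of `(p.1, p.2, p.1 + p.2)` by `z`
gives a triangle of `A`; a nonzero such `z` means that `p` shares a vertex with another triangle. -/
def overlapShifts (A : Finset V) (p : V × V) : Finset V :=
  {z | (p.1, p.2 + z) ∈ trianglePairs A ∨ (p.1 + z, p.2) ∈ trianglePairs A ∨
    (p.1 + z, p.2 + z) ∈ trianglePairs A}

variable {A B : Finset V}

lemma mem_trianglePairs {x y : V} : (x, y) ∈ trianglePairs A ↔ x ∈ A ∧ y ∈ A ∧ x + y ∈ A := by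
  simp only [trianglePairs, mem_filter_univ]

lemma mem_trianglePairs_comm {x y : V} : (x, y) ∈ trianglePairs A ↔ (y, x) ∈ trianglePairs A := by
  rw [mem_trianglePairs, mem_trianglePairs, add_comm x y, and_left_comm]

lemma trianglePairs_mono (h : A ⊆ B) : trianglePairs A ⊆ trianglePairs B := fun _ hp =>
  have hp := mem_trianglePairs.1 hp
  mem_trianglePairs.2 ⟨h hp.1, h hp.2.1, h hp.2.2⟩

lemma triangleDegree_mono (h : A ⊆ B) (x : V) : triangleDegree A x ≤ triangleDegree B x :=
  card_le_card (monotone_filter_right _ fun _ _ hy => trianglePairs_mono h hy)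

lemma mem_overlapShifts {p : V × V} {z : V} : z ∈ overlapShifts A p ↔
    (p.1, p.2 + z) ∈ trianglePairs A ∨ (p.1 + z, p.2) ∈ trianglePairs A ∨
      (p.1 + z, p.2 + z) ∈ trianglePairs A := by
  simp only [overlapShifts, mem_filter_univ]

variable [Module (ZMod 2) V]

lemma card_overlapShifts_le (x y : V) : #(overlapShifts A (x, y)) ≤
    triangleDegree A x + (triangleDegree A y + triangleDegree A (x + y)) := by
  have hfst : #{z | (x, y + z) ∈ trianglePairs A} = triangleDegree A x :=
    card_filter_add_left y fun w => (x, w) ∈ trianglePairs A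
  have hsnd : #{z | (x + z, y) ∈ trianglePairs A} = triangleDegree A y := by
    simp_rw [mem_trianglePairs_comm (y := y)]
    exact card_filter_add_left x fun w => (y, w) ∈ trianglePairs A
  have hboth : #{z | (x + z, y + z) ∈ trianglePairs A} ≤ triangleDegree A (x + y) := by
    rw [triangleDegree, ← card_filter_add_left x fun w => (x + y, w) ∈ trianglePairs A]
    refine card_le_card (monotone_filter_right _ fun z _ hz => ?_)
    obtain ⟨hx, hy, hxy⟩ := mem_trianglePairs.1 hz
    rw [add_comm y z, ZModModule.add_add_add_cancel] at hxy
    have hsum : x + y + (x + z) = y + z := by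
      rw [add_comm x y, ZModModule.add_add_add_cancel]
    exact mem_trianglePairs.2 ⟨hxy, hx, hsum ▸ hy⟩
  rw [overlapShifts, filter_or, filter_or]
  refine (card_union_le _ _).trans ?_
  rw [hfst]
  gcongr
  refine (card_union_le _ _).trans ?_
  rw [hsnd]
  gcongr

lemma mul_card_overlapShifts_le {m : ℕ} (hA : ∀ x ∈ A, m * triangleDegree A x ≤ Fintype.card V)
    {p : V × V} (hp : p ∈ trianglePairs A) : m * #(overlapShifts A p) ≤ 3 * Fintype.card V := by
  obtain ⟨hx, hy, hxy⟩ := mem_trianglePairs.1 hp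
  calc m * #(overlapShifts A p)
      ≤ m * (triangleDegree A p.1 + (triangleDegree A p.2 + triangleDegree A (p.1 + p.2))) := by
        gcongr
        exact card_overlapShifts_le _ _
    _ ≤ 3 * Fintype.card V := by linarith [hA _ hx, hA _ hy, hA _ hxy]

end Triangles

section RandomLinearMap

lemma exists_card_le_mul_card_filter {α Ω : Type*} [Fintype Ω] [Nonempty Ω] {k : ℕ} {T : Finset α}
    (r : Ω → α → Prop) (h : ∀ a ∈ T, Fintype.card Ω ≤ k * #{ω | r ω a}) :
    ∃ ω, #T ≤ k * #{a ∈ T | r ω a} := by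
  obtain ⟨ω, -, hω⟩ := exists_le_of_sum_le (s := univ) (f := fun _ : Ω => #T)
    (g := fun ω => k * #{a ∈ T | r ω a}) univ_nonempty (by
      calc ∑ _ω : Ω, #T = ∑ _a ∈ T, Fintype.card Ω := by simp [mul_comm]
        _ ≤ ∑ a ∈ T, k * #{ω | r ω a} := sum_le_sum h
        _ = k * ∑ a ∈ T, #{ω | r ω a} := (mul_sum _ _ _).symm
        _ = k * ∑ ω, #{a ∈ T | r ω a} :=
            congrArg _ (sum_card_bipartiteAbove_eq_sum_card_bipartiteBelow fun a ω => r ω a)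
        _ = ∑ ω, k * #{a ∈ T | r ω a} := mul_sum _ _ _)
  exact ⟨ω, hω⟩

variable {K U V : Type*} [Field K] [AddCommGroup U] [Module K U] [AddCommGroup V] [Module K V]

lemma exists_linearMap_apply_eq {s : U} (hs : s ≠ 0) (v : V) : ∃ φ : U →ₗ[K] V, φ s = v := by
  obtain ⟨f, hf⟩ := Module.Projective.exists_dual_ne_zero K hs
  exact ⟨f.smulRight ((f s)⁻¹ • v), by simp [hf]⟩

variable [Fintype V] [Fintype (U →ₗ[K] V)]

lemma card_linearMap_apply_mem {s : U} (hs : s ≠ 0) (S : Finset V) :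
    #{φ : U →ₗ[K] V | φ s ∈ S} * Fintype.card V = #S * Fintype.card (U →ₗ[K] V) := by
  let eval : (U →ₗ[K] V) →+ V := (LinearMap.applyₗ s : (U →ₗ[K] V) →ₗ[K] V).toAddMonoidHom
  have hfiber (v) : #{φ : U →ₗ[K] V | φ s = v} = #{φ : U →ₗ[K] V | φ s = 0} :=
    AddMonoidHom.card_fiber_eq_of_mem_range eval (exists_linearMap_apply_eq hs v)
      (exists_linearMap_apply_eq hs 0)
  have hcard (T : Finset V) :
      #{φ : U →ₗ[K] V | φ s ∈ T} = #T * #{φ : U →ₗ[K] V | φ s = 0} := by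
    rw [card_eq_sum_card_fiberwise (f := eval) (s := {φ | φ s ∈ T}) (t := T)
      fun φ hφ => (mem_filter.1 hφ).2, ← smul_eq_mul, ← sum_const]
    refine sum_congr rfl fun v hv => ?_
    rw [filter_filter, ← hfiber v]
    exact congrArg card (filter_congr fun φ _ => and_iff_right_of_imp fun hφ => hφ.symm ▸ hv)
  have htotal := hcard univ
  simp only [mem_univ, filter_true, card_univ] at htotal
  rw [hcard, htotal]
  ring

lemma two_mul_card_linearMap_exists_mem_le [Fintype U] {S : Finset V}
    (hS : 2 * Fintype.card U * #S ≤ Fintype.card V) :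
    2 * #{φ : U →ₗ[K] V | ∃ s ≠ 0, φ s ∈ S} ≤ Fintype.card (U →ₗ[K] V) := by
  have hunion : #{φ : U →ₗ[K] V | ∃ s ≠ 0, φ s ∈ S} ≤
      ∑ s ∈ univ.erase (0 : U), #{φ : U →ₗ[K] V | φ s ∈ S} := by
    refine (card_le_card fun φ hφ => ?_).trans card_biUnion_le
    simpa using hφ
  refine Nat.le_of_mul_le_mul_right ?_ (Fintype.card_pos (α := V))
  calc 2 * #{φ : U →ₗ[K] V | ∃ s ≠ 0, φ s ∈ S} * Fintype.card V
      ≤ 2 * (∑ s ∈ univ.erase (0 : U), #{φ : U →ₗ[K] V | φ s ∈ S}) * Fintype.card V := by gcongr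
    _ = 2 * ∑ _s ∈ univ.erase (0 : U), #S * Fintype.card (U →ₗ[K] V) := by
        rw [mul_assoc, sum_mul]
        exact congrArg _ (sum_congr rfl fun _ hs => card_linearMap_apply_mem (ne_of_mem_erase hs) S)
    _ ≤ 2 * (Fintype.card U * (#S * Fintype.card (U →ₗ[K] V))) := by
        rw [sum_const, smul_eq_mul]
        gcongr
        exact card_le_univ _
    _ = 2 * Fintype.card U * #S * Fintype.card (U →ₗ[K] V) := by ring
    _ ≤ Fintype.card V * Fintype.card (U →ₗ[K] V) := by gcongr
    _ = Fintype.card (U →ₗ[K] V) * Fintype.card V := mul_comm _ _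

lemma card_linearMap_le_two_mul_card [Fintype U] {S : Finset V}
    (hS : 2 * Fintype.card U * #S ≤ Fintype.card V) :
    Fintype.card (U →ₗ[K] V) ≤ 2 * #{φ : U →ₗ[K] V | ∀ s, φ s ∈ S → s = 0} := by
  have hcompl := card_filter_add_card_filter_not (s := univ)
    fun φ : U →ₗ[K] V => ∀ s, φ s ∈ S → s = 0
  have hnot (φ : U →ₗ[K] V) : (¬∀ s, φ s ∈ S → s = 0) ↔ ∃ s ≠ 0, φ s ∈ S := by
    simp [and_comm]
  simp_rw [hnot, card_univ] at hcompl
  have hbad := two_mul_card_linearMap_exists_mem_le (K := K) hS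
  omega

end RandomLinearMap

section IsolatedTriangles

variable {U V : Type*} [AddCommGroup U] [Module (ZMod 2) U]
  [AddCommGroup V] [Fintype V] [Module (ZMod 2) V]

/-- The triangles of `A` that share a vertex with no other triangle once `A` is pulled back along an
affine map with linear part `φ`. As `0` is an overlap shift of every triangle, there are no isolated
triangles unless `φ` is injective. -/
def isolatedPairs (φ : U →ₗ[ZMod 2] V) (A : Finset V) : Finset (V × V) :=
  {p ∈ trianglePairs A | ∀ s, φ s ∈ overlapShifts A p → s = 0}

variable {A : Finset V}

lemma exists_card_trianglePairs_le [Fintype U]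
    (hA : ∀ x ∈ A, 6 * Fintype.card U * triangleDegree A x ≤ Fintype.card V) :
    ∃ φ : U →ₗ[ZMod 2] V, #(trianglePairs A) ≤ 2 * #(isolatedPairs φ A) := by
  let _ : Fintype (U →ₗ[ZMod 2] V) := Fintype.ofInjective _ DFunLike.coe_injective
  refine exists_card_le_mul_card_filter _ fun p hp => ?_
  convert card_linearMap_le_two_mul_card (K := ZMod 2) (U := U) (S := overlapShifts A p) ?_
  linarith [mul_card_overlapShifts_le hA hp]

/-- If `x i + y j + z k = 0`, then the first vertex of `i`, the second one of `j` and the third one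
of `k` form a triangle of `A`, which shares a vertex with each of the triangles `i`, `j`, `k`. -/
lemma tricoloredSumFree_isolatedPairs (φ : U →ₗ[ZMod 2] V) (q : V × V) :
    TricoloredSumFree (fun i : {p : U × U // (φ p.1, φ p.2) + q ∈ isolatedPairs φ A} => i.1.1)
      (fun i => i.1.2) (fun i => i.1.1 + i.1.2) := by
  obtain ⟨a, b⟩ := q
  have hshift (u w : U) (c : V) : φ u + c + φ (u + w) = φ w + c := by
    rw [map_add, add_comm (φ u) c, ZModModule.add_add_add_cancel, add_comm]
  rintro ⟨⟨u₁, v₁⟩, h₁⟩ ⟨⟨u₂, v₂⟩, h₂⟩ ⟨⟨u₃, v₃⟩, h₃⟩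
  simp only [Subtype.mk.injEq, Prod.mk.injEq]
  constructor
  · intro hsum
    simp only [isolatedPairs, mem_filter, Prod.mk_add_mk, mem_trianglePairs] at h₁ h₂ h₃
    obtain ⟨⟨hx, -, -⟩, hiso₁⟩ := h₁
    obtain ⟨⟨-, hy, -⟩, hiso₂⟩ := h₂
    obtain ⟨⟨-, -, hz⟩, hiso₃⟩ := h₃
    have heq : u₁ + v₂ = u₃ + v₃ := by
      rwa [← ZModModule.sub_eq_add _ (u₃ + v₃), sub_eq_zero] at hsum
    have hshared : (φ u₁ + a, φ v₂ + b) ∈ trianglePairs A := by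
      refine mem_trianglePairs.2 ⟨hx, hy, ?_⟩
      rwa [add_add_add_comm, ← map_add, heq, map_add, add_add_add_comm]
    have hv₁ : v₁ + v₂ = 0 := hiso₁ _ (mem_overlapShifts.2 (Or.inl (by rwa [hshift])))
    have hu₂ : u₂ + u₁ = 0 := hiso₂ _ (mem_overlapShifts.2 (Or.inr (Or.inl (by rwa [hshift]))))
    have hsame : u₃ + u₁ = v₃ + v₂ := by
      rw [add_comm, ← ZModModule.sub_eq_add, ← ZModModule.sub_eq_add, sub_eq_sub_iff_add_eq_add,
        heq, add_comm]
    have hu₃ : u₃ + u₁ = 0 := hiso₃ _ (mem_overlapShifts.2 (Or.inr (Or.inr (by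
      rw [hshift, hsame, hshift]
      exact hshared))))
    have hv₃ : v₃ + v₂ = 0 := hsame ▸ hu₃
    rw [← ZModModule.sub_eq_add, sub_eq_zero] at hv₁ hu₂ hu₃ hv₃
    exact ⟨⟨hu₂.symm, hv₁⟩, hu₂.trans hu₃.symm, hv₃.symm⟩
  · rintro ⟨⟨rfl, rfl⟩, rfl, rfl⟩
    exact ZModModule.add_self _

end IsolatedTriangles

lemma card_mul_card_le_of_forall_translate {G H : Type*} [AddGroup H] [Fintype G] [Fintype H]
    [DecidableEq H] (f : G → H) {I : Finset H} {B : ℕ} (hB : ∀ q, #{p | f p + q ∈ I} ≤ B) :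
    #I * Fintype.card G ≤ B * Fintype.card H := by
  calc #I * Fintype.card G = ∑ p, #{q | f p + q ∈ I} := by
        simp [card_filter_add_left _ (· ∈ I), mul_comm]
    _ = ∑ q, #{p | f p + q ∈ I} := sum_card_bipartiteAbove_eq_sum_card_bipartiteBelow _
    _ ≤ B * Fintype.card H := by
        rw [mul_comm, ← smul_eq_mul, ← card_univ]
        exact sum_le_card_nsmul _ _ _ fun q _ => hB q

lemma card_trianglePairs_mul_pow_le {V : Type*} [AddCommGroup V] [Fintype V] [Module (ZMod 2) V]
    {A : Finset V} {e : ℕ} (hA : ∀ x ∈ A, 8 ^ (e + 1) * triangleDegree A x ≤ Fintype.card V) :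
    #(trianglePairs A) * 256 ^ e ≤ 6 * 27 ^ e * Fintype.card V ^ 2 := by
  let U := Fin (3 * e) → ZMod 2
  have hU : Fintype.card U = 8 ^ e := by simp [U, pow_mul]
  obtain ⟨φ, hφ⟩ := exists_card_trianglePairs_le (U := U) (A := A) fun x hx => by
    refine le_trans ?_ (hA x hx)
    rw [hU, pow_succ']
    gcongr
    norm_num
  have htranslate (q : V × V) :
      #{p : U × U | (φ p.1, φ p.2) + q ∈ isolatedPairs φ A} ≤ 3 * 27 ^ e / 4 ^ e := by
    rw [Nat.le_div_iff_mul_le (by positivity), ← Fintype.card_subtype]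
    exact (tricoloredSumFree_isolatedPairs φ q).card_mul_four_pow_le
  have hcard := card_mul_card_le_of_forall_translate
    (fun p : U × U => (φ p.1, φ p.2)) htranslate
  rw [Fintype.card_prod, Fintype.card_prod, hU] at hcard
  calc #(trianglePairs A) * 256 ^ e
      ≤ 2 * #(isolatedPairs φ A) * 256 ^ e := by gcongr
    _ = 2 * (#(isolatedPairs φ A) * (8 ^ e * 8 ^ e)) * 4 ^ e := by
        rw [show 256 = 8 * 8 * 4 by norm_num, mul_pow, mul_pow]
        ring
    _ ≤ 2 * (3 * 27 ^ e / 4 ^ e * (Fintype.card V * Fintype.card V)) * 4 ^ e := by gcongr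
    _ = 2 * (3 * 27 ^ e / 4 ^ e * 4 ^ e) * Fintype.card V ^ 2 := by ring
    _ ≤ 2 * (3 * 27 ^ e) * Fintype.card V ^ 2 :=
        Nat.mul_le_mul_right _ (Nat.mul_le_mul_left _ (Nat.div_mul_le_self _ _))
    _ = 6 * 27 ^ e * Fintype.card V ^ 2 := by ring

end Sampling

section Iteration

open Finset

variable {V : Type*} [AddCommGroup V] [Fintype V]

/-- The vertices of `A` lying in at most `card V / m` triangles. -/
def lowDegree (A : Finset V) (m : ℕ) : Finset V :=
  {x ∈ A | m * triangleDegree A x ≤ Fintype.card V}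

/-- Deleting at most `r` elements makes `A` triangle-free. -/
def CloseToTriangleFree (A : Finset V) (r : ℝ) : Prop :=
  ∃ B ⊆ A, trianglePairs B = ∅ ∧ #(A \ B) ≤ r

variable {A B : Finset V}

lemma lowDegree_subset (A : Finset V) (m : ℕ) : lowDegree A m ⊆ A :=
  filter_subset _ _

lemma mul_triangleDegree_lowDegree_le {m : ℕ} {x : V} (hx : x ∈ lowDegree A m) :
    m * triangleDegree (lowDegree A m) x ≤ Fintype.card V :=
  (Nat.mul_le_mul_left m (triangleDegree_mono (lowDegree_subset A m) x)).trans (mem_filter.1 hx).2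

lemma sum_triangleDegree (A : Finset V) : ∑ x ∈ A, triangleDegree A x = #(trianglePairs A) := by
  rw [card_eq_sum_card_fiberwise (f := Prod.fst) (t := A) fun p hp => (mem_trianglePairs.1 hp).1]
  refine sum_congr rfl fun x _ => ?_
  refine card_bij (fun y _ => (x, y)) ?_ ?_ ?_ <;> aesop

lemma card_mul_card_sdiff_lowDegree_le (A : Finset V) (m : ℕ) :
    Fintype.card V * #(A \ lowDegree A m) ≤ m * #(trianglePairs A) := by
  calc Fintype.card V * #(A \ lowDegree A m)
      = ∑ _x ∈ A \ lowDegree A m, Fintype.card V := by simp [mul_comm]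
    _ ≤ ∑ x ∈ A \ lowDegree A m, m * triangleDegree A x := sum_le_sum fun _ hx => by
        obtain ⟨hxA, hlow⟩ := mem_sdiff.1 hx
        exact (not_le.1 fun hle => hlow (mem_filter.2 ⟨hxA, hle⟩)).le
    _ ≤ ∑ x ∈ A, m * triangleDegree A x := sum_le_sum_of_subset sdiff_subset
    _ = m * #(trianglePairs A) := by rw [← mul_sum, sum_triangleDegree]

lemma card_sdiff_lowDegree_le (A : Finset V) (m : ℕ) :
    (#(A \ lowDegree A m) : ℝ) ≤ m * #(trianglePairs A) / Fintype.card V := by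
  rw [le_div_iff₀' (by exact_mod_cast Fintype.card_pos)]
  exact_mod_cast card_mul_card_sdiff_lowDegree_le A m

lemma CloseToTriangleFree.of_subset (hAB : A ⊆ B) {r : ℝ} (h : CloseToTriangleFree A r) :
    CloseToTriangleFree B (#(B \ A) + r) := by
  obtain ⟨C, hCA, hC, hcard⟩ := h
  refine ⟨C, hCA.trans hAB, hC, ?_⟩
  have hunion : #(B \ C) ≤ #(B \ A) + #(A \ C) :=
    (card_le_card (sdiff_triangle B A C)).trans (card_union_le _ _)
  have : (#(B \ C) : ℝ) ≤ #(B \ A) + #(A \ C) := by exact_mod_cast hunion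
  linarith

lemma CloseToTriangleFree.mono {r s : ℝ} (h : CloseToTriangleFree A r) (hrs : r ≤ s) :
    CloseToTriangleFree A s :=
  let ⟨C, hCA, hC, hcard⟩ := h
  ⟨C, hCA, hC, hcard.trans hrs⟩

lemma closeToTriangleFree_card (A : Finset V) : CloseToTriangleFree A (Fintype.card V) := by
  refine ⟨∅, empty_subset _, by simp [trianglePairs], ?_⟩
  exact_mod_cast card_le_univ (A \ ∅)

lemma trianglePairs_eq_empty {m : ℕ} (hm : Fintype.card V < m)
    (hA : ∀ x ∈ A, m * triangleDegree A x ≤ Fintype.card V) : trianglePairs A = ∅ := by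
  rw [← card_eq_zero, ← sum_triangleDegree]
  refine sum_eq_zero fun x hx => Nat.eq_zero_of_not_pos fun hpos => ?_
  exact absurd (hA x hx) (not_le.2 (hm.trans_le (Nat.le_mul_of_pos_right m hpos)))

variable [Module (ZMod 2) V]

lemma card_sdiff_lowDegree_le_of_degree_le {e : ℕ}
    (hA : ∀ x ∈ A, 8 ^ (e + 1) * triangleDegree A x ≤ Fintype.card V) :
    #(A \ lowDegree A (8 ^ (e + 2))) ≤ 384 * (27 / 32 : ℝ) ^ e * Fintype.card V := by
  have : (0 : ℝ) < Fintype.card V := by exact_mod_cast Fintype.card_pos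
  have htriangles : (#(trianglePairs A) : ℝ) ≤ 6 * (27 / 256) ^ e * Fintype.card V ^ 2 := by
    rw [div_pow, ← mul_div_assoc, div_mul_eq_mul_div, le_div_iff₀ (by positivity)]
    exact_mod_cast card_trianglePairs_mul_pow_le hA
  calc (#(A \ lowDegree A (8 ^ (e + 2))) : ℝ)
      ≤ (8 ^ (e + 2) : ℕ) * #(trianglePairs A) / Fintype.card V := card_sdiff_lowDegree_le A _
    _ ≤ (8 ^ (e + 2) : ℕ) * (6 * (27 / 256) ^ e * Fintype.card V ^ 2) / Fintype.card V := by gcongr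
    _ = 384 * (8 * (27 / 256)) ^ e * Fintype.card V := by
        rw [mul_pow]
        push_cast
        field_simp
        ring
    _ = 384 * (27 / 32) ^ e * Fintype.card V := by norm_num

/-- Passing from degrees at most `card V / 8 ^ (e + 1)` to degrees at most `card V / 8 ^ (e + 2)`
costs `384 * (27 / 32) ^ e * card V` elements; these costs add up to a geometric series, with
`384 / (1 - 27 / 32) < 2458`. -/
theorem closeToTriangleFree_of_degree_le (e : ℕ) (A : Finset V)
    (hA : ∀ x ∈ A, 8 ^ (e + 1) * triangleDegree A x ≤ Fintype.card V) :
    CloseToTriangleFree A (2458 * (27 / 32) ^ e * Fintype.card V) := by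
  rcases lt_or_ge (Fintype.card V) (8 ^ (e + 1)) with hlt | hge
  · refine ⟨A, Subset.rfl, trianglePairs_eq_empty hlt hA, ?_⟩
    rw [sdiff_self, bot_eq_empty, card_empty, Nat.cast_zero]
    positivity
  · have : e < Fintype.card V :=
      (Nat.lt_pow_self (by norm_num : 1 < 8)).trans_le
        ((Nat.pow_le_pow_right (by norm_num) e.le_succ).trans hge)
    have hrest := closeToTriangleFree_of_degree_le (e + 1) (lowDegree A (8 ^ (e + 2)))
      fun x hx => mul_triangleDegree_lowDegree_le hx
    refine (hrest.of_subset (lowDegree_subset A _)).mono ?_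
    calc #(A \ lowDegree A (8 ^ (e + 2))) + 2458 * (27 / 32 : ℝ) ^ (e + 1) * Fintype.card V
        ≤ 384 * (27 / 32) ^ e * Fintype.card V +
            2458 * (27 / 32 : ℝ) ^ (e + 1) * Fintype.card V := by
          gcongr
          exact card_sdiff_lowDegree_le_of_degree_le hA
      _ = (384 + 2458 * (27 / 32)) * (27 / 32) ^ e * Fintype.card V := by ring
      _ ≤ 2458 * (27 / 32) ^ e * Fintype.card V := by
          gcongr
          norm_num
termination_by Fintype.card V - e

theorem closeToTriangleFree (A : Finset V) (e : ℕ) :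
    CloseToTriangleFree A (8 ^ (e + 1) * #(trianglePairs A) / Fintype.card V +
      2458 * (27 / 32) ^ e * Fintype.card V) := by
  have hlow := closeToTriangleFree_of_degree_le e (lowDegree A (8 ^ (e + 1)))
    fun x hx => mul_triangleDegree_lowDegree_le hx
  refine (hlow.of_subset (lowDegree_subset A _)).mono ?_
  gcongr
  exact_mod_cast card_sdiff_lowDegree_le A (8 ^ (e + 1))

end Iteration

section PolynomialBound

open Finset

/-- Since `8 * (27 / 32) ^ 13 ≤ 1`, the growth of `8 ^ e` is at most the 13th power of the decay of
`(27 / 32) ^ e`. -/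
lemma exists_pow_le_half_and_pow_le {ε : ℝ} (hε : 0 < ε) (hε1 : ε ≤ 1) :
    ∃ e : ℕ, 2458 * (27 / 32 : ℝ) ^ e ≤ ε / 2 ∧ ε ^ 13 * 8 ^ (e + 1) ≤ 2 ^ 175 := by
  obtain ⟨k, hlt, hle⟩ := exists_nat_pow_near_of_lt_one (x := ε / 2 ^ 13) (y := 27 / 32)
    (by positivity) (div_le_one_of_le₀ (hε1.trans (by norm_num)) (by norm_num)) (by norm_num)
    (by norm_num)
  refine ⟨k + 1, by linarith, ?_⟩
  have hpow : ε ^ 13 ≤ (2 ^ 13 * (27 / 32) ^ k) ^ 13 := by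
    gcongr
    rwa [div_le_iff₀' (by norm_num)] at hle
  calc ε ^ 13 * 8 ^ (k + 1 + 1) ≤ (2 ^ 13 * (27 / 32) ^ k) ^ 13 * 8 ^ (k + 1 + 1) := by gcongr
    _ = 2 ^ 175 * (8 * (27 / 32) ^ 13) ^ k := by
        rw [mul_pow, mul_pow 8, ← pow_mul, ← pow_mul, ← pow_mul, mul_comm k 13]
        ring
    _ ≤ 2 ^ 175 * 1 := by
        gcongr
        exact pow_le_one₀ (by norm_num) (by norm_num)
    _ = 2 ^ 175 := mul_one _

theorem triangle_removal_F2n_general {V : Type*} [AddCommGroup V] [Fintype V] [Module (ZMod 2) V]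
    {A : Finset V} {ε : ℝ} (hε : 0 < ε)
    (hA : ∀ r, CloseToTriangleFree A r → ε * Fintype.card V ≤ r) :
    ε ^ 14 / 2 ^ 176 * Fintype.card V ^ 2 ≤ #(trianglePairs A) := by
  have hV : (0 : ℝ) < Fintype.card V := by exact_mod_cast Fintype.card_pos
  have hε1 : ε ≤ 1 := (mul_le_iff_le_one_left hV).1 (hA _ (closeToTriangleFree_card A))
  obtain ⟨e, hdecay, hgrowth⟩ := exists_pow_le_half_and_pow_le hε hε1
  have hfar := hA _ (closeToTriangleFree A e)
  have hhalf : ε / 2 * Fintype.card V ≤ 8 ^ (e + 1) * #(trianglePairs A) / Fintype.card V := by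
    linarith [mul_le_mul_of_nonneg_right hdecay hV.le]
  rw [le_div_iff₀ hV] at hhalf
  calc ε ^ 14 / 2 ^ 176 * Fintype.card V ^ 2
      = ε ^ 13 / 2 ^ 175 * (ε / 2 * Fintype.card V * Fintype.card V) := by ring
    _ ≤ ε ^ 13 / 2 ^ 175 * (8 ^ (e + 1) * #(trianglePairs A)) := by gcongr
    _ = ε ^ 13 * 8 ^ (e + 1) / 2 ^ 175 * #(trianglePairs A) := by ring
    _ ≤ #(trianglePairs A) :=
        mul_le_of_le_one_left (Nat.cast_nonneg _) (div_le_one_of_le₀ hgrowth (by positivity))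

end PolynomialBound

section TowerBound

lemma lt_tower (m : ℕ) : m < tower m := by
  induction m with
  | zero => exact Nat.one_pos
  | succ m ih => exact (Nat.succ_le_of_lt ih).trans_lt Nat.lt_two_pow_self

lemma two_pow_le_tower (m : ℕ) : 2 ^ m ≤ tower m := by
  cases m with
  | zero => exact le_rfl
  | succ m => exact Nat.pow_le_pow_right two_pos (lt_tower m)

lemma one_div_tower_le {ε : ℝ} (hε : 0 < ε) (k c : ℕ) :
    1 / (tower (⌈k / Real.log 2 * Real.log (1 / ε)⌉₊ + c) : ℝ) ≤ ε ^ k / 2 ^ c := by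
  have hlog := Real.log_pos one_lt_two
  rw [one_div_le (by exact_mod_cast (Nat.zero_le _).trans_lt (lt_tower _)) (by positivity)]
  calc 1 / (ε ^ k / 2 ^ c)
      = (2 : ℝ) ^ (k / Real.log 2 * Real.log (1 / ε)) * 2 ^ c := by
        rw [Real.rpow_def_of_pos two_pos, div_mul_eq_mul_div, mul_div_cancel₀ _ hlog.ne',
          ← Real.log_pow, Real.exp_log (by positivity)]
        rw [one_div_div, one_div_pow, div_eq_mul_one_div, mul_comm]
    _ ≤ (2 : ℝ) ^ (⌈k / Real.log 2 * Real.log (1 / ε)⌉₊ : ℝ) * 2 ^ c := by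
        gcongr
        exacts [one_le_two, Nat.le_ceil _]
    _ = (2 : ℝ) ^ (⌈k / Real.log 2 * Real.log (1 / ε)⌉₊ + c) := by
        rw [Real.rpow_natCast, pow_add]
    _ ≤ tower (⌈k / Real.log 2 * Real.log (1 / ε)⌉₊ + c) := by
        exact_mod_cast two_pow_le_tower _

end TowerBound

section Cube

variable {n : ℕ} {A : Set (G n)}

lemma card_trianglePairs_le_triCount (A : Set (G n)) :
    (trianglePairs A.toFinset).card ≤ triCount A := by
  rw [triCount, triBetween, Nat.card_eq_fintype_card, ← Fintype.card_coe]
  have hmem (p : trianglePairs A.toFinset) : p.1.1 ∈ A ∧ p.1.2 ∈ A ∧ p.1.1 + p.1.2 ∈ A := by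
    simpa only [Set.mem_toFinset] using mem_trianglePairs.1 p.2
  refine Fintype.card_le_of_injective (fun p => ⟨(p.1.1, p.1.2, p.1.1 + p.1.2),
    (hmem p).1, (hmem p).2.1, (hmem p).2.2, ZModModule.add_self _⟩) fun p q hpq => ?_
  simp only [Subtype.mk.injEq, Prod.mk.injEq] at hpq
  exact Subtype.ext (Prod.ext hpq.1 hpq.2.1)

lemma FarFromTriangleFree.le_of_closeToTriangleFree {ε r : ℝ} (hA : FarFromTriangleFree A ε)
    (hr : CloseToTriangleFree A.toFinset r) : ε * Fintype.card (G n) ≤ r := by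
  obtain ⟨B, hBA, hB, hcard⟩ := hr
  have hfar := hA (B : Set (G n)) (by simpa using hBA) fun x hx y hy z hz hsum => by
    have hzxy : x + y = z := by rwa [← ZModModule.sub_eq_add, sub_eq_zero] at hsum
    have hxy : (x, y) ∈ trianglePairs B := mem_trianglePairs.2 ⟨hx, hy, hzxy ▸ hz⟩
    simp [hB] at hxy
  calc ε * Fintype.card (G n) = ε * 2 ^ n := by simp
    _ ≤ Nat.card ↥(A \ B) := hfar
    _ ≤ r := by
        rw [Nat.card_eq_card_toFinset, Set.toFinset_sdiff, Finset.toFinset_coe]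
        convert hcard

end Cube

theorem triangle_removal_F2n :
    ∃ (C : ℝ) (c : ℕ), 0 < C ∧ 0 < c ∧
      ∀ ε : ℝ, 0 < ε → ε ≤ 1 →
        ∀ (n : ℕ) (A : Set (G n)),
          FarFromTriangleFree A ε →
          (1 / (tower (⌈C * Real.log (1 / ε)⌉₊ + c) : ℝ)) * ((2 : ℝ) ^ n) ^ 2
            ≤ (triCount A : ℝ) := by
  refine ⟨14 / Real.log 2, 176, by positivity, by norm_num, fun ε hε _ n A hA => ?_⟩
  calc 1 / (tower (⌈14 / Real.log 2 * Real.log (1 / ε)⌉₊ + 176) : ℝ) * ((2 : ℝ) ^ n) ^ 2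
      ≤ ε ^ 14 / 2 ^ 176 * (2 ^ n) ^ 2 := by
        gcongr ?_ * _
        simpa only [Nat.cast_ofNat] using one_div_tower_le hε 14 176
    _ ≤ ((trianglePairs A.toFinset).card : ℝ) := by
        simpa using triangle_removal_F2n_general hε fun _ => hA.le_of_closeToTriangleFree
    _ ≤ (triCount A : ℝ) := by exact_mod_cast card_trianglePairs_le_triCount A
end
end

section
/- Let ε₁,…,ε_s and x₁,…,x_s be nonnegative real numbers with ∑_{i∈[s]} ε_i = 1, and let a = ∑_{i∈[s]} ε_i x_i. Suppose β ≤ 1 and I ⊆ [s] is such that x_i ≤ β·a for all i ∈ I, and let c = ∑_{i∈I} ε_i. Then ∑_{i∈[s]} ε_i·f(x_i) ≥ f(a) + (1 − β + f(β))·c·a, where f(x) = x·log x for x > 0 and f(0) = 0. -/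
open scoped BigOperators

noncomputable section

/-!
The gap between `ent` and its tangent line at `a > 0` is `t ↦ a * klFun (t / a)`, where
`klFun u = u * log u + 1 - u`. The tangent line, being affine, averages to `ent a` at the mean `a`,
so the Jensen defect is exactly `a` times the average of `klFun (x i / a)`. Now `klFun` is
nonnegative on `[0, ∞)` and decreasing on `[0, 1]`, so each `i ∈ I` contributes at least
`ε i * klFun β = ε i * (1 - β + ent β)`, and no other index contributes negatively.
-/

section JensenDefect

open InformationTheory

theorem klFun_eq_one_sub_add_ent (u : ℝ) : klFun u = 1 - u + ent u := by
  rw [klFun_apply, ent]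
  ring

theorem antitoneOn_klFun_Icc : AntitoneOn klFun (Set.Icc 0 1) := by
  refine antitoneOn_of_deriv_nonpos (convex_Icc 0 1) continuous_klFun.continuousOn ?_ ?_
  · rw [interior_Icc]
    exact fun u hu ↦ (hasDerivAt_klFun hu.1.ne').differentiableAt.differentiableWithinAt
  · rw [interior_Icc, deriv_klFun]
    exact fun u hu ↦ Real.log_nonpos hu.1.le hu.2.le

theorem ent_mul (a u : ℝ) : ent (a * u) = u * ent a + a * ent u := by
  have h := Real.negMulLog_mul a u
  simp only [Real.negMulLog, neg_mul, mul_neg] at h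
  simp only [ent]
  linarith

theorem ent_eq_tangent_add_klFun {a : ℝ} (ha : a ≠ 0) (t : ℝ) :
    ent t = ent a + (Real.log a + 1) * (t - a) + a * klFun (t / a) := by
  obtain ⟨u, rfl⟩ : ∃ u, t = a * u := ⟨t / a, (mul_div_cancel₀ t ha).symm⟩
  rw [mul_div_cancel_left₀ u ha, klFun_eq_one_sub_add_ent, ent_mul, ent]
  ring

variable {ι : Type*} {t I : Finset ι} {w x : ι → ℝ} {a β : ℝ}

theorem sum_mul_ent_eq_ent_add_sum_mul_klFun (hw₁ : ∑ i ∈ t, w i = 1)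
    (ha : a = ∑ i ∈ t, w i * x i) (ha₀ : a ≠ 0) :
    ∑ i ∈ t, w i * ent (x i) = ent a + a * ∑ i ∈ t, w i * klFun (x i / a) := by
  have tangent_sum : ∑ i ∈ t, w i * (x i - a) = 0 := by
    simp only [mul_sub, Finset.sum_sub_distrib, ← Finset.sum_mul, hw₁, ← ha, one_mul, sub_self]
  calc ∑ i ∈ t, w i * ent (x i)
      = ∑ i ∈ t, (w i * ent a + (Real.log a + 1) * (w i * (x i - a))
          + a * (w i * klFun (x i / a))) :=
        Finset.sum_congr rfl fun i _ ↦ by rw [ent_eq_tangent_add_klFun ha₀ (x i)]; ring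
    _ = ent a + a * ∑ i ∈ t, w i * klFun (x i / a) := by
        simp only [Finset.sum_add_distrib, ← Finset.sum_mul, ← Finset.mul_sum, hw₁, tangent_sum,
          one_mul, mul_zero, add_zero]

theorem klFun_mul_sum_le_sum_mul_klFun (hw : ∀ i ∈ t, 0 ≤ w i) (hx : ∀ i ∈ t, 0 ≤ x i)
    (hβ : β ≤ 1) (hI : I ⊆ t) (hxI : ∀ i ∈ I, x i ≤ β) :
    klFun β * ∑ i ∈ I, w i ≤ ∑ i ∈ t, w i * klFun (x i) := by
  have klFun_le : ∀ i ∈ I, klFun β ≤ klFun (x i) := fun i hi ↦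
    have hxi := hx i (hI hi)
    antitoneOn_klFun_Icc ⟨hxi, (hxI i hi).trans hβ⟩ ⟨hxi.trans (hxI i hi), hβ⟩ (hxI i hi)
  calc klFun β * ∑ i ∈ I, w i
      = ∑ i ∈ I, w i * klFun β := by rw [← Finset.sum_mul, mul_comm]
    _ ≤ ∑ i ∈ I, w i * klFun (x i) :=
        Finset.sum_le_sum fun i hi ↦ mul_le_mul_of_nonneg_left (klFun_le i hi) (hw i (hI hi))
    _ ≤ ∑ i ∈ t, w i * klFun (x i) :=
        Finset.sum_le_sum_of_subset_of_nonneg hI fun i hi _ ↦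
          mul_nonneg (hw i hi) (klFun_nonneg (hx i hi))

theorem sum_mul_ent_eq_zero (hw : ∀ i ∈ t, 0 ≤ w i) (hx : ∀ i ∈ t, 0 ≤ x i)
    (h : ∑ i ∈ t, w i * x i = 0) : ∑ i ∈ t, w i * ent (x i) = 0 := by
  have mul_eq_zero_of_mem :=
    (Finset.sum_eq_zero_iff_of_nonneg fun i hi ↦ mul_nonneg (hw i hi) (hx i hi)).1 h
  exact Finset.sum_eq_zero fun i hi ↦ by
    rw [ent, ← mul_assoc, mul_eq_zero_of_mem i hi, zero_mul]

theorem defect_jensen_entropy_general (hw : ∀ i ∈ t, 0 ≤ w i) (hx : ∀ i ∈ t, 0 ≤ x i)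
    (hw₁ : ∑ i ∈ t, w i = 1) (ha : a = ∑ i ∈ t, w i * x i) (hβ : β ≤ 1) (hI : I ⊆ t)
    (hxI : ∀ i ∈ I, x i ≤ β * a) :
    ent a + (1 - β + ent β) * (∑ i ∈ I, w i) * a ≤ ∑ i ∈ t, w i * ent (x i) := by
  have ha₀ : 0 ≤ a := ha ▸ Finset.sum_nonneg fun i hi ↦ mul_nonneg (hw i hi) (hx i hi)
  rcases ha₀.eq_or_lt with rfl | ha_pos
  · rw [sum_mul_ent_eq_zero hw hx ha.symm, ent, zero_mul, mul_zero, add_zero]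
  · have klFun_sum_le : klFun β * ∑ i ∈ I, w i ≤ ∑ i ∈ t, w i * klFun (x i / a) :=
      klFun_mul_sum_le_sum_mul_klFun hw (fun i hi ↦ div_nonneg (hx i hi) ha₀) hβ hI
        fun i hi ↦ (div_le_iff₀ ha_pos).2 (hxI i hi)
    rw [sum_mul_ent_eq_ent_add_sum_mul_klFun hw₁ ha ha_pos.ne', ← klFun_eq_one_sub_add_ent,
      mul_comm _ a]
    gcongr

end JensenDefect

theorem defect_jensen_entropy (s : ℕ) (ε x : Fin s → ℝ)
    (hε : ∀ i, 0 ≤ ε i) (hx : ∀ i, 0 ≤ x i)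
    (hsum : ∑ i, ε i = 1) (a : ℝ) (ha : a = ∑ i, ε i * x i)
    (β : ℝ) (hβ0 : 0 ≤ β) (hβ1 : β ≤ 1)
    (I : Finset (Fin s)) (hI : ∀ i ∈ I, x i ≤ β * a)
    (c : ℝ) (hc : c = ∑ i ∈ I, ε i) :
    ent a + (1 - β + ent β) * c * a ≤ ∑ i, ε i * ent (x i) :=
  hc ▸ defect_jensen_entropy_general (fun i _ ↦ hε i) (fun i _ ↦ hx i) hsum ha hβ1
    I.subset_univ hI
end
end

section
/- Let H' ≤ H ≤ G = 𝔽₂ⁿ be subgroups and A ⊆ G. Then for every g ∈ G, F_A(H+g, H') ≥ F_A(H+g, H), and consequently F_A(G, H') ≥ F_A(G, H). -/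
/-!
The density of `A` on the coset `H + g` is the average of the indicator of `A` over that coset.
Averaging first over cosets of `H'` and then over cosets of `H ≥ H'` is the same as averaging over
cosets of `H` (the tower property), so the density on `H + g` is the mean of the densities on the
cosets of `H'` inside `H + g`, and Jensen's inequality for the convex function `x log x` gives the
local bound. Averaging it over all `g` gives the global one.
-/

open scoped Classical BigOperators

noncomputable section

theorem posSMulMono_nnrat (𝕜 β : Type*) [Field 𝕜] [LinearOrder 𝕜] [IsStrictOrderedRing 𝕜]
    [AddCommGroup β] [Preorder β] [Module 𝕜 β] [PosSMulMono 𝕜 β] [Module ℚ≥0 β] :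
    PosSMulMono ℚ≥0 β where
  smul_le_smul_of_nonneg_left q _ a b hab := by
    rw [← NNRat.cast_smul_eq_nnqsmul 𝕜, ← NNRat.cast_smul_eq_nnqsmul 𝕜]
    exact smul_le_smul_of_nonneg_left hab (by positivity)

section Expect

variable {𝕜 E β M ι : Type*}

theorem expect_expect_add [AddCommMonoid M] [Module ℚ≥0 M] [Fintype ι] [Nonempty ι]
    {K : Type*} [AddGroup K] [Fintype K] (f : K → M) (u : ι → K) :
    𝔼 x, 𝔼 i, f (x + u i) = 𝔼 x, f x :=
  calc
    𝔼 x, 𝔼 i, f (x + u i) = 𝔼 i, 𝔼 x, f (x + u i) := Finset.expect_comm _ _ _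
    _ = 𝔼 _i : ι, 𝔼 x, f x := Finset.expect_congr rfl fun i _ ↦
      Fintype.expect_equiv (Equiv.addRight (u i)) _ _ fun _ ↦ rfl
    _ = 𝔼 x, f x := Fintype.expect_const _

theorem expect_indicator_one_comp {α R : Type*} [Semifield R] [CharZero R] [Fintype ι]
    (A : Set α) (u : ι → α) :
    𝔼 i, A.indicator (1 : α → R) (u i) = Nat.card (u ⁻¹' A) / Nat.card ι := by
  simp [Fintype.expect_eq_sum_div_card, Set.indicator_apply, Finset.sum_boole,
    Fintype.card_subtype]

variable [Field 𝕜] [LinearOrder 𝕜] [IsStrictOrderedRing 𝕜]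
  [AddCommGroup E] [Module 𝕜 E] [Module ℚ≥0 E] {s : Set E} {t : Finset ι} {p : ι → E}

theorem expect_mem_of_convex (hs : Convex 𝕜 s) (ht : t.Nonempty) (hp : ∀ i ∈ t, p i ∈ s) :
    𝔼 i ∈ t, p i ∈ s := by
  rw [Finset.expect, inv_natCast_smul_eq ℚ≥0 𝕜, Finset.smul_sum]
  exact hs.sum_mem (fun _ _ ↦ by positivity) (by simp [ht.card_ne_zero]) hp

variable [AddCommGroup β] [PartialOrder β] [IsOrderedAddMonoid β]
  [Module 𝕜 β] [IsStrictOrderedModule 𝕜 β] [Module ℚ≥0 β]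

theorem map_expect_le_of_convexOn {φ : E → β} (hφ : ConvexOn 𝕜 s φ) (ht : t.Nonempty)
    (hp : ∀ i ∈ t, p i ∈ s) :
    φ (𝔼 i ∈ t, p i) ≤ 𝔼 i ∈ t, φ (p i) := by
  simp only [Finset.expect, inv_natCast_smul_eq ℚ≥0 𝕜, Finset.smul_sum]
  exact hφ.map_sum_le (fun _ _ ↦ by positivity) (by simp [ht.card_ne_zero]) hp

end Expect

section CosetMean

variable {Γ M : Type*} [AddGroup Γ] [AddCommMonoid M] [Module ℚ≥0 M]

/-- The average of `f` over the left coset `g + H`, that is, the conditional expectation of `f` on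
the partition of `Γ` into left cosets of `H`. It is kept as a function of `g ∈ Γ`, constant on
cosets, so that averages over a chain of subgroups can be nested. -/
def cosetMean (H : AddSubgroup Γ) [Fintype H] (f : Γ → M) (g : Γ) : M := 𝔼 h : H, f (g + h)

theorem cosetMean_cosetMean_of_le {H' H : AddSubgroup Γ} [Fintype H'] [Fintype H] (hle : H' ≤ H)
    (f : Γ → M) : cosetMean H (cosetMean H' f) = cosetMean H f := by
  funext g
  simpa only [cosetMean, AddSubgroup.coe_add, AddSubgroup.coe_inclusion, add_assoc] using
    expect_expect_add (fun h : H ↦ f (g + h)) (AddSubgroup.inclusion hle)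

theorem expect_cosetMean [Fintype Γ] (H : AddSubgroup Γ) [Fintype H] (f : Γ → M) :
    𝔼 g, cosetMean H f g = 𝔼 g, f g :=
  expect_expect_add f ((↑) : H → Γ)

end CosetMean

section Jensen

variable {Γ 𝕜 E β : Type*} [AddGroup Γ] [Field 𝕜] [LinearOrder 𝕜] [IsStrictOrderedRing 𝕜]
  [AddCommGroup E] [Module 𝕜 E] [Module ℚ≥0 E]
  [AddCommGroup β] [PartialOrder β] [IsOrderedAddMonoid β]
  [Module 𝕜 β] [IsStrictOrderedModule 𝕜 β] [Module ℚ≥0 β]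
  {H' H : AddSubgroup Γ} [Fintype H'] [Fintype H] {s : Set E} {φ : E → β} {f : Γ → E}

theorem map_cosetMean_le_cosetMean (hφ : ConvexOn 𝕜 s φ) (hf : ∀ x, f x ∈ s) (hle : H' ≤ H)
    (g : Γ) : φ (cosetMean H f g) ≤ cosetMean H (φ ∘ cosetMean H' f) g := by
  rw [← cosetMean_cosetMean_of_le hle]
  exact map_expect_le_of_convexOn hφ Finset.univ_nonempty fun _ _ ↦
    expect_mem_of_convex hφ.1 Finset.univ_nonempty fun _ _ ↦ hf _

theorem entropy_basic_ineq_two_general [Fintype Γ] (hφ : ConvexOn 𝕜 s φ) (hf : ∀ x, f x ∈ s)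
    (hle : H' ≤ H) :
    (∀ g, φ (cosetMean H f g) ≤ cosetMean H (φ ∘ cosetMean H' f) g) ∧
      𝔼 g, φ (cosetMean H f g) ≤ 𝔼 g, φ (cosetMean H' f g) := by
  have := posSMulMono_nnrat 𝕜 β
  have hcoset := map_cosetMean_le_cosetMean hφ hf hle
  refine ⟨hcoset, ?_⟩
  calc
    𝔼 g, φ (cosetMean H f g) ≤ 𝔼 g, cosetMean H (φ ∘ cosetMean H' f) g :=
      Finset.expect_le_expect fun g _ ↦ hcoset g
    _ = 𝔼 g, φ (cosetMean H' f g) := expect_cosetMean H _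

end Jensen

section MeanEntropy

variable {n : ℕ} (A : Set (G n))

theorem convexOn_ent : ConvexOn ℝ (Set.Ici 0) ent := Real.convexOn_mul_log

theorem coset_eq_range (H : AddSubgroup (G n)) (g : G n) :
    coset H g = Set.range fun h : H ↦ g + h := by
  ext x
  simp [coset, ← eq_neg_add_iff_add_eq, ZModModule.neg_eq_self, add_comm]

theorem dens_eq_cosetMean (H : AddSubgroup (G n)) :
    dens A H = cosetMean H (A.indicator 1) := by
  funext g
  have hinj : Function.Injective fun h : H ↦ g + h :=
    (add_right_injective g).comp Subtype.val_injective
  rw [dens, coset_eq_range, ← Set.image_preimage_eq_inter_range, Nat.card_image_of_injective hinj]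
  exact (expect_indicator_one_comp A _).symm

theorem meanEntG_eq_expect (H : AddSubgroup (G n)) :
    meanEntG A H = 𝔼 g, ent (dens A H g) :=
  (Fintype.expect_eq_sum_div_card _).symm

theorem meanEntCoset_eq_cosetMean (H H' : AddSubgroup (G n)) :
    meanEntCoset A H H' = cosetMean H (ent ∘ dens A H') := by
  funext g
  simp only [meanEntCoset, cosetMean, Function.comp_apply, Nat.card_eq_fintype_card,
    Fintype.expect_eq_sum_div_card]

end MeanEntropy

theorem entropy_basic_ineq_two {n : ℕ} (H' H : AddSubgroup (G n)) (hle : H' ≤ H)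
    (A : Set (G n)) :
    (∀ g : G n, ent (dens A H g) ≤ meanEntCoset A H H' g) ∧
    meanEntG A H ≤ meanEntG A H' := by
  simp only [meanEntCoset_eq_cosetMean, meanEntG_eq_expect, dens_eq_cosetMean]
  exact entropy_basic_ineq_two_general convexOn_ent
    (fun _ ↦ Set.mem_Ici.2 <| Set.indicator_apply_nonneg fun _ ↦ zero_le_one) hle
end
end

section
/- (Finding superregular parts.) Let H ≤ G = 𝔽₂ⁿ be a subgroup, g ∈ G, ρ ∈ (0,1], d > 0, and let A ⊆ H+g satisfy |A| ≥ d·|H|. Then there exist a subgroup H₁ ≤ H, an element z₁ ∈ H, and a set A₁ such that: (1) the index |H/H₁| is at most 2^{log(1/d)/log(1+ρ)}; (2) z₁ ∈ H and the character (-1)^{⟨·,η⟩} identifying any nontrivial coset structure vanishes appropriately, i.e. z₁ is a coset representative of H₁ in H (z₁ ∈ H ∩ H₁^⊥ for a fixed choice of coset representatives); (3) A₁ ⊆ A, A₁ ⊆ H₁ + z₁ + g, and |A₁| ≥ d·|H₁|; (4) the indicator function of A₁ restricted to H₁ + z₁ + g is ρ-superregular on H₁ + z₁ + g. -/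
/-!
The idea is density increment. If a character `χ` nontrivial on `H` satisfies
`|f̂_H^g(χ)| > ρ * f̂_H^g(0)`, then on one of the two cosets of `K = H ∩ ker χ` inside `H + g` the
mean of `f` is `f̂_H^g(0) + |f̂_H^g(χ)| > (1 + ρ) * f̂_H^g(0)`. Pass to that coset and repeat:
after `k` steps the index is `2 ^ k` and the mean has grown by a factor of at least `(1 + ρ) ^ k`,
so an upper bound for `f` bounds `k`.
-/

open scoped Classical BigOperators

noncomputable section

theorem pow_le_rpow_log_div_log {a b x : ℝ} {k : ℕ} (ha : 1 ≤ a) (hb : 1 < b) (h : b ^ k ≤ x) :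
    a ^ k ≤ a ^ (Real.log x / Real.log b) := by
  have hk : (k : ℝ) ≤ Real.log x / Real.log b := by
    rw [le_div_iff₀ (Real.log_pos hb), ← Real.log_pow]
    exact Real.log_le_log (by positivity) h
  rw [← Real.rpow_natCast]
  exact Real.rpow_le_rpow_of_exponent_le ha hk

theorem cast_card_div_cast_card {X : Type*} [AddGroup X] {H K : AddSubgroup X} [Finite K]
    (hKH : K ≤ H) : (Nat.card H : ℝ) / Nat.card K = K.relIndex H := by
  have hmul : Nat.card K * K.relIndex H = Nat.card H := by
    simpa only [AddSubgroup.relIndex_bot_left] using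
      AddSubgroup.relIndex_mul_relIndex ⊥ K H bot_le hKH
  rw [div_eq_iff (mod_cast Nat.card_pos.ne'), ← hmul, Nat.cast_mul, mul_comm]

theorem sum_eq_add_sum_of_relIndex_eq_two {X M : Type*} [AddGroup X] [AddCommMonoid M]
    {H K : AddSubgroup X} [Fintype H] [Fintype K] (hKH : K ≤ H) (hK : K.relIndex H = 2) {z : X}
    (hzH : z ∈ H) (hzK : z ∉ K) (F : X → M) :
    ∑ x : H, F x = ∑ y : K, F y + ∑ y : K, F (y + z) := by
  have add_mem_iff (x : H) : (x + z : X) ∈ K ↔ (x : X) ∉ K := by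
    simpa [AddSubgroup.mem_addSubgroupOf, hzK] using
      AddSubgroup.add_mem_iff_of_index_two (H := K.addSubgroupOf H) hK (a := x) (b := ⟨z, hzH⟩)
  let inK : K ≃ {x : H // (x : X) ∈ K} := (AddSubgroup.addSubgroupOfEquivOfLe hKH).symm.toEquiv
  let translate : {x : H // (x : X) ∈ K} ≃ {x : H // (x : X) ∉ K} :=
    (Equiv.addRight (⟨z, hzH⟩ : H)).subtypeEquiv fun x => iff_not_comm.1 (add_mem_iff x)
  rw [← Fintype.sum_subtype_add_sum_subtype (fun x : H => (x : X) ∈ K),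
    ← inK.sum_comp, ← (inK.trans translate).sum_comp]
  rfl

section

variable {n : ℕ} {H K : AddSubgroup (G n)} {A : Set (G n)} {g x z η : G n} {f f' : G n → ℝ}
  {ρ d M : ℝ}

theorem dotp_add_left (x y η : G n) : dotp (x + y) η = dotp x η + dotp y η := by
  simp only [dotp, Pi.add_apply, add_mul, Finset.sum_add_distrib]

/-- The homomorphism `x ↦ ⟨x, η⟩`, whose kernel is that of the character `(-1)^{⟨·, η⟩}`. -/
def dotpHom (η : G n) : G n →+ ZMod 2 := AddMonoidHom.mk' (dotp · η) (dotp_add_left · · η)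

theorem mem_ker_dotpHom : x ∈ (dotpHom η).ker ↔ dotp x η = 0 := Iff.rfl

theorem relIndex_ker_dotpHom (hz : z ∈ H) (hzη : dotp z η ≠ 0) :
    (dotpHom η).ker.relIndex H = 2 := by
  refine AddSubgroup.relIndex_eq_two_iff_exists_notMem_and.2 ⟨z, hz, hzη, fun x _ => ?_⟩
  have add_eq_zero_or : ∀ a b : ZMod 2, b ≠ 0 → a + b = 0 ∨ a = 0 := by decide
  simpa only [mem_ker_dotpHom, dotp_add_left] using add_eq_zero_or _ _ hzη

theorem chi_of_dotp_eq_zero (h : dotp x η = 0) : chi x η = 1 := if_pos h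

theorem chi_of_dotp_ne_zero (h : dotp x η ≠ 0) : chi x η = -1 := if_neg h

theorem chi_zero_right (x : G n) : chi x 0 = 1 :=
  chi_of_dotp_eq_zero (by simp only [dotp, Pi.zero_apply, mul_zero, Finset.sum_const_zero])

theorem chi_add_left (x y η : G n) : chi (x + y) η = chi x η * chi y η := by
  have add_eq_zero_iff : ∀ a b : ZMod 2, a + b = 0 ↔ (a = 0 ↔ b = 0) := by decide
  by_cases hx : dotp x η = 0 <;> by_cases hy : dotp y η = 0 <;>
    simp [chi, dotp_add_left, add_eq_zero_iff, hx, hy]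

theorem mem_coset : x ∈ coset H g ↔ x + g ∈ H := Iff.rfl

theorem add_mem_coset (hx : x ∈ H) (g : G n) : x + g ∈ coset H g := by
  rwa [mem_coset, add_assoc, ZModModule.add_self, add_zero]

theorem coset_subset_coset (hKH : K ≤ H) (hz : z ∈ H) (g : G n) :
    coset K (g + z) ⊆ coset H g := by
  intro x hx
  rw [mem_coset, ← add_assoc] at hx
  exact (H.add_mem_cancel_right hz).1 (hKH hx)

theorem fCoeff_congr (hf : Set.EqOn f f' (coset H g)) (η : G n) :
    fCoeff H g f η = fCoeff H g f' η := by
  unfold fCoeff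
  congr! 3 with x
  exact hf (add_mem_coset x.2 g)

theorem SuperregularOn.congr (h : SuperregularOn H g ρ f) (hf : Set.EqOn f f' (coset H g)) :
    SuperregularOn H g ρ f' := by
  intro η hη
  simpa only [fCoeff_congr hf] using h η hη

theorem fCoeff_zero_le (hf : ∀ x ∈ coset H g, f x ≤ M) : fCoeff H g f 0 ≤ M := by
  rw [fCoeff, div_le_iff₀' (mod_cast Nat.card_pos), Nat.card_eq_fintype_card, ← nsmul_eq_mul]
  refine Finset.sum_le_card_nsmul _ _ _ fun x _ => ?_
  rw [chi_zero_right, mul_one]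
  exact hf _ (add_mem_coset x.2 g)

theorem fCoeff_indicator_zero (A : Set (G n)) (H : AddSubgroup (G n)) (g : G n) :
    fCoeff H g (A.indicator 1) 0 = dens A H g := by
  let e : {x : H // (x : G n) + g ∈ A} ≃ ↥(A ∩ coset H g) :=
    { toFun x := ⟨x + g, x.2, add_mem_coset x.1.2 g⟩
      invFun a := ⟨⟨a + g, a.2.2⟩, by
        simpa only [add_assoc, ZModModule.add_self, add_zero] using a.2.1⟩
      left_inv x := by ext1; ext1; simp [add_assoc, ZModModule.add_self]
      right_inv a := by ext1; simp [add_assoc, ZModModule.add_self] }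
  simp only [fCoeff, dens, chi_zero_right, mul_one, Set.indicator_apply, Pi.one_apply,
    Finset.sum_boole, ← Nat.card_congr e, Nat.card_eq_fintype_card, Fintype.card_subtype]

theorem le_fCoeff_indicator_zero_iff :
    d ≤ fCoeff H g (A.indicator 1) 0 ↔ d * Nat.card H ≤ Nat.card ↥(A ∩ coset H g) := by
  rw [fCoeff_indicator_zero, dens, le_div_iff₀ (mod_cast Nat.card_pos)]

theorem fCoeff_eq_fCoeff_zero_of_mem_ann (hη : η ∈ ann K) (g : G n) (f : G n → ℝ) :
    fCoeff K g f η = fCoeff K g f 0 := by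
  unfold fCoeff
  congr! 3 with x
  rw [chi_of_dotp_eq_zero (hη x x.2), chi_zero_right]

theorem fCoeff_eq_of_relIndex_eq_two (hKH : K ≤ H) (hK : K.relIndex H = 2) (hzH : z ∈ H)
    (hzK : z ∉ K) (g : G n) (f : G n → ℝ) (η : G n) :
    fCoeff H g f η = (fCoeff K g f η + chi z η * fCoeff K (g + z) f η) / 2 := by
  have hcard : (Nat.card H : ℝ) = 2 * Nat.card K := by
    rw [← div_eq_iff (mod_cast Nat.card_pos.ne'), cast_card_div_cast_card hKH, hK, Nat.cast_two]
  have htranslate (y : K) :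
      f (y + z + g) * chi ((y : G n) + z) η = chi z η * (f (y + (g + z)) * chi y η) := by
    rw [chi_add_left, add_assoc, add_comm z g]
    ring
  simp only [fCoeff, hcard, htranslate, ← Finset.mul_sum,
    sum_eq_add_sum_of_relIndex_eq_two hKH hK hzH hzK fun x => f (x + g) * chi x η]
  field_simp

theorem exists_mul_fCoeff_zero_lt_of_not_superregularOn (h : ¬ SuperregularOn H g ρ f) :
    ∃ K ≤ H, K.relIndex H = 2 ∧ ∃ z ∈ H, (1 + ρ) * fCoeff H g f 0 < fCoeff K (g + z) f 0 := by
  unfold SuperregularOn at h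
  push Not at h
  obtain ⟨η, ⟨z, hz, hzη⟩, hlarge⟩ := h
  let K := H ⊓ (dotpHom η).ker
  have hKH : K ≤ H := inf_le_left
  have hK : K.relIndex H = 2 :=
    (AddSubgroup.inf_relIndex_left _ _).trans (relIndex_ker_dotpHom hz hzη)
  have hzK : z ∉ K := fun hzK => hzη hzK.2
  have hη : η ∈ ann K := fun x hx => hx.2
  have hzero : fCoeff H g f 0 = (fCoeff K g f 0 + fCoeff K (g + z) f 0) / 2 := by
    rw [fCoeff_eq_of_relIndex_eq_two hKH hK hz hzK, chi_zero_right, one_mul]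
  have hcoeff : fCoeff H g f η = (fCoeff K g f 0 - fCoeff K (g + z) f 0) / 2 := by
    rw [fCoeff_eq_of_relIndex_eq_two hKH hK hz hzK, chi_of_dotp_ne_zero hzη, neg_one_mul,
      ← sub_eq_add_neg, fCoeff_eq_fCoeff_zero_of_mem_ann hη, fCoeff_eq_fCoeff_zero_of_mem_ann hη]
  refine ⟨K, hKH, hK, ?_⟩
  rcases lt_abs.1 hlarge with hpos | hneg
  · refine ⟨0, H.zero_mem, ?_⟩
    rw [add_zero]
    linarith
  · exact ⟨z, hz, by linarith⟩

theorem exists_superregularOn_pow_mul_fCoeff_zero_le (hρ : -1 ≤ ρ) (f : G n → ℝ)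
    (H : AddSubgroup (G n)) (g : G n) :
    ∃ K ≤ H, ∃ z ∈ H, SuperregularOn K (g + z) ρ f ∧
      ∃ k : ℕ, K.relIndex H = 2 ^ k ∧ (1 + ρ) ^ k * fCoeff H g f 0 ≤ fCoeff K (g + z) f 0 := by
  induction H using WellFoundedLT.induction generalizing g with
  | ind H ih =>
    by_cases hreg : SuperregularOn H g ρ f
    · exact ⟨H, le_rfl, 0, H.zero_mem, by rwa [add_zero], 0, by simp⟩
    obtain ⟨H', hH'H, hidx, z, hz, hmean⟩ := exists_mul_fCoeff_zero_lt_of_not_superregularOn hreg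
    have hlt : H' < H := lt_of_le_not_ge hH'H fun hHH' => by
      simp [AddSubgroup.relIndex_eq_one.2 hHH'] at hidx
    obtain ⟨K, hKH', w, hw, hreg', k, hidx', hmean'⟩ := ih H' hlt (g + z)
    rw [add_assoc] at hreg' hmean'
    refine ⟨K, hKH'.trans hH'H, z + w, H.add_mem hz (hH'H hw), hreg', k + 1, ?_, ?_⟩
    · rw [← AddSubgroup.relIndex_mul_relIndex K H' H hKH' hH'H, hidx, hidx', pow_succ]
    · calc (1 + ρ) ^ (k + 1) * fCoeff H g f 0
          = (1 + ρ) ^ k * ((1 + ρ) * fCoeff H g f 0) := by ring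
        _ ≤ (1 + ρ) ^ k * fCoeff H' (g + z) f 0 := by
          gcongr
          exact pow_nonneg (by linarith) k
        _ ≤ fCoeff K (g + (z + w)) f 0 := hmean'

theorem finding_superregular_parts_general (hρ : 0 < ρ) (hd : 0 < d)
    (hfM : ∀ x ∈ coset H g, f x ≤ M) (hmean : d ≤ fCoeff H g f 0) :
    ∃ (H₁ : AddSubgroup (G n)) (z₁ : G n),
      H₁ ≤ H ∧
      (Nat.card H : ℝ) / Nat.card H₁ ≤ 2 ^ (Real.log (M / d) / Real.log (1 + ρ)) ∧
      z₁ ∈ H ∧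
      d ≤ fCoeff H₁ (g + z₁) f 0 ∧
      SuperregularOn H₁ (g + z₁) ρ f := by
  obtain ⟨H₁, hle, z₁, hz₁, hreg, k, hidx, hincr⟩ :=
    exists_superregularOn_pow_mul_fCoeff_zero_le (by linarith : -1 ≤ ρ) f H g
  have hgrowth : (1 + ρ) ^ k * d ≤ fCoeff H₁ (g + z₁) f 0 := by
    refine le_trans ?_ hincr
    gcongr
  refine ⟨H₁, z₁, hle, ?_, hz₁, ?_, hreg⟩
  · have hpow : (1 + ρ) ^ k ≤ M / d := by
      rw [le_div_iff₀ hd]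
      exact hgrowth.trans (fCoeff_zero_le fun x hx => hfM x (coset_subset_coset hle hz₁ g hx))
    rw [cast_card_div_cast_card hle, hidx, Nat.cast_pow, Nat.cast_two]
    exact pow_le_rpow_log_div_log one_le_two (by linarith) hpow
  · exact (le_mul_of_one_le_left hd.le (one_le_pow₀ (by linarith))).trans hgrowth

end

theorem finding_superregular_parts {n : ℕ} (H : AddSubgroup (G n)) (g : G n)
    (ρ d : ℝ) (hρ : ρ ∈ Set.Ioc (0 : ℝ) 1) (hd : 0 < d)
    (A : Set (G n)) (hA : A ⊆ coset H g)
    (hAcard : d * (Nat.card ↥H : ℝ) ≤ (Nat.card ↥A : ℝ)) :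
    ∃ (A₁ : Set (G n)) (H₁ : AddSubgroup (G n)) (z₁ : G n),
      H₁ ≤ H ∧
      (Nat.card ↥H : ℝ) / (Nat.card ↥H₁ : ℝ)
        ≤ (2 : ℝ) ^ (Real.log (1 / d) / Real.log (1 + ρ)) ∧
      z₁ ∈ H ∧
      A₁ ⊆ A ∧ A₁ ⊆ coset H₁ (g + z₁) ∧
      d * (Nat.card ↥H₁ : ℝ) ≤ (Nat.card ↥A₁ : ℝ) ∧
      SuperregularOn H₁ (g + z₁) ρ (Set.indicator A₁ 1) := by
  have hmean : d ≤ fCoeff H g (A.indicator 1) 0 := by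
    rwa [le_fCoeff_indicator_zero_iff, Set.inter_eq_left.2 hA]
  obtain ⟨H₁, z₁, hle, hidx, hz₁, hmean₁, hreg⟩ := finding_superregular_parts_general hρ.1 hd
    (fun x _ => Set.indicator_le_self' (fun _ _ => zero_le_one) x) hmean
  exact ⟨A ∩ coset H₁ (g + z₁), H₁, z₁, hle, hidx, hz₁, Set.inter_subset_left,
    Set.inter_subset_right, le_fCoeff_indicator_zero_iff.1 hmean₁,
    hreg.congr fun x hx => by simp [Set.indicator_apply, hx]⟩
end
end
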